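/- Let D be either D^(0) or D^{((1,0))}. For all multi-indices γ', γ: if D_{γ'}^γ ≠ 0 then γ ≺ γ' and |γ| ≤ |γ'| + 1 − α. -/

import Mathlib

open Finsupp

noncomputable section

/-- The index set `I`: symbols `z_k` for `k : ℕ` (left summand) and `z_n` for
`n ∈ ℕ² \ {(0,0)}` (right summand). -/
abbrev RSIdx : Type := ℕ ⊕ {n : ℕ × ℕ // n ≠ (0, 0)}

/-- Multi-indices: finitely supported functions from the index set to `ℕ`. -/
abbrev MIdx : Type := RSIdx →₀ ℕ

/-- The unit multi-index `e_k`. -/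
def eK (k : ℕ) : MIdx := Finsupp.single (Sum.inl k) 1

/-- The unit multi-index `e_n` for `n ≠ (0,0)`. -/
def eN (n : {n : ℕ × ℕ // n ≠ (0, 0)}) : MIdx := Finsupp.single (Sum.inr n) 1

/-- The scaled length `[β] = Σ_k k·β(k) − Σ_{n≠(0,0)} β(n)`. -/
def slen (β : MIdx) : ℤ :=
  β.sum fun i m =>
    match i with
    | Sum.inl k => (k : ℤ) * (m : ℤ)
    | Sum.inr _ => -(m : ℤ)

/-- The parabolic length `|n| = n₁ + 2 n₂` of `n ∈ ℕ²`. -/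
def plen (n : ℕ × ℕ) : ℕ := n.1 + 2 * n.2

/-- The polynomial part `|β|_p = Σ_{n≠(0,0)} |n|·β(n)`. -/
def polyPart (β : MIdx) : ℕ :=
  β.sum fun i m =>
    match i with
    | Sum.inl _ => 0
    | Sum.inr n => plen n.val * m

/-- The homogeneity `|β| = α(1+[β]) + |β|_p`. -/
def homog (α : ℝ) (β : MIdx) : ℝ := α * (1 + (slen β : ℝ)) + (polyPart β : ℝ)

/-- `β` is purely polynomial iff `β = e_n` for some `n ≠ (0,0)`. -/
def PurelyPoly (β : MIdx) : Prop := ∃ n, β = eN n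

/-- `β` is populated iff it is purely polynomial or `[β] ≥ 0`. -/
def Populated (β : MIdx) : Prop := PurelyPoly β ∨ 0 ≤ slen β

/-- The ordinal `|β|_≺ = [β] + (1/2)|β|_p + (1/4)β(0)`. -/
def precNorm (β : MIdx) : ℝ :=
  (slen β : ℝ) + (polyPart β : ℝ) / 2 + (β (Sum.inl 0) : ℝ) / 4

open Classical in
/-- The matrix entry `(D^(0))_β^γ` of the derivation
`D^(0) = Σ_k (k+1) z_{k+1} ∂_{z_k}`: it is `(k+1)·γ(k)` if there exists `k` with
`γ + e_{k+1} = β + e_k` (such `k` is unique), and `0` otherwise. -/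
def D0 (β γ : MIdx) : ℕ :=
  if h : ∃ k : ℕ, γ + eK (k + 1) = β + eK k then
    (h.choose + 1) * γ (Sum.inl h.choose)
  else 0

open Classical in
/-- The matrix entry of `D^(n)` for `n ∈ ℕ²`, where `D^((0,0))` means `D^(0)` and,
for `n ≠ (0,0)`, `(D^(n))_β^γ = β(n) + 1` if `γ = β + e_n`, and `0` otherwise. -/
def DMat (n : ℕ × ℕ) : MIdx → MIdx → ℕ :=
  if hn : n = (0, 0) then D0
  else fun β γ =>
    if γ = β + eN ⟨n, hn⟩ then β (Sum.inr ⟨n, hn⟩) + 1 else 0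

/-- Composition of two `ℕ`-valued matrices indexed by multi-indices; the sum over the
intermediate multi-index is well-defined (by row-finiteness) as a `finsum`. -/
def matMul (A B : MIdx → MIdx → ℕ) : MIdx → MIdx → ℕ :=
  fun β γ => ∑ᶠ δ : MIdx, A β δ * B δ γ

open Classical in
/-- The identity matrix. -/
def matId : MIdx → MIdx → ℕ := fun β γ => if γ = β then 1 else 0

/-- Composition of a list of matrices. -/
def matProd : List (MIdx → MIdx → ℕ) → MIdx → MIdx → ℕ
  | [] => matId
  | A :: l => matMul A (matProd l)

/-- The `l`-fold matrix power of `D^(0)`. -/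
def D0pow : ℕ → MIdx → MIdx → ℕ
  | 0 => matId
  | l + 1 => matMul D0 (D0pow l)

/-!
`[·]`, `|·|_p` and `|·|_≺` are additive, and so is `|·| - α`. A nonzero entry of `D^(0)` means
`γ + e_{k+1} = γ' + e_k` for some `k`, and one of `D^(n)` means `γ = γ' + e_n`, so the change from
`γ'` to `γ` is read off the unit multi-indices: `|e_{k+1}|_≺ - |e_k|_≺` is `1`, or `3/4` if `k = 0`,
while `|e_{(1,0)}|_≺ = -1/2`; and `|e_{k+1}| - |e_k| = α`, while `|e_{(1,0)}| = 1`.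
-/

section UnitMultiIndices

variable (k : ℕ) (n : {n : ℕ × ℕ // n ≠ (0, 0)})

@[simp]
theorem slen_eK : slen (eK k) = k := by
  simp [slen, eK]

@[simp]
theorem slen_eN : slen (eN n) = -1 := by
  simp [slen, eN]

@[simp]
theorem polyPart_eK : polyPart (eK k) = 0 := by
  simp [polyPart, eK]

@[simp]
theorem polyPart_eN : polyPart (eN n) = plen n := by
  simp [polyPart, eN]

theorem precNorm_eK : precNorm (eK k) = k + if k = 0 then 1 / 4 else 0 := by
  have happly : eK k (Sum.inl 0) = if k = 0 then 1 else 0 := by simp [eK, Finsupp.single_apply]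
  rw [precNorm, happly, slen_eK, polyPart_eK]
  split_ifs <;> simp

theorem precNorm_eN : precNorm (eN n) = plen n / 2 - 1 := by
  have happly : eN n (Sum.inl 0) = 0 := by simp [eN]
  rw [precNorm, happly, slen_eN, polyPart_eN]
  push_cast
  ring

theorem homog_eK (α : ℝ) : homog α (eK k) = α * (1 + k) := by
  simp [homog]

theorem homog_eN (α : ℝ) : homog α (eN n) = plen n := by
  simp [homog]

end UnitMultiIndices

section Additivity

variable (β γ : MIdx)

theorem slen_add : slen (β + γ) = slen β + slen γ := by
  refine Finsupp.sum_add_index' ?_ ?_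
  · rintro (k | n) <;> simp
  · rintro (k | n) a b <;> push_cast <;> ring

theorem polyPart_add : polyPart (β + γ) = polyPart β + polyPart γ := by
  refine Finsupp.sum_add_index' ?_ ?_
  · rintro (_ | n) <;> simp
  · rintro (_ | n) a b <;> ring

theorem precNorm_add : precNorm (β + γ) = precNorm β + precNorm γ := by
  simp only [precNorm, slen_add, polyPart_add, Finsupp.add_apply]
  push_cast
  ring

theorem homog_add (α : ℝ) : homog α (β + γ) = homog α β + homog α γ - α := by
  simp only [homog, slen_add, polyPart_add]
  push_cast
  ring

end Additivity

section MatrixEntries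

variable {β γ : MIdx} {n : {n : ℕ × ℕ // n ≠ (0, 0)}}

theorem exists_add_eK_eq_of_D0_ne_zero (h : D0 β γ ≠ 0) :
    ∃ k, γ + eK (k + 1) = β + eK k := by
  by_contra hk
  exact h (dif_neg hk)

theorem eq_add_eN_of_DMat_ne_zero (h : DMat n β γ ≠ 0) : γ = β + eN n := by
  by_contra hγ
  exact h (by simp [DMat, n.2, hγ])

theorem precNorm_lt_of_D0_ne_zero (h : D0 β γ ≠ 0) : precNorm γ < precNorm β := by
  obtain ⟨k, hk⟩ := exists_add_eK_eq_of_D0_ne_zero h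
  have hnorm : precNorm γ + precNorm (eK (k + 1)) = precNorm β + precNorm (eK k) := by
    rw [← precNorm_add, hk, precNorm_add]
  have heK : precNorm (eK k) < precNorm (eK (k + 1)) := by
    rw [precNorm_eK, precNorm_eK, if_neg k.succ_ne_zero]
    split_ifs <;> push_cast <;> linarith
  linarith

theorem homog_eq_of_D0_ne_zero (α : ℝ) (h : D0 β γ ≠ 0) : homog α γ = homog α β - α := by
  obtain ⟨k, hk⟩ := exists_add_eK_eq_of_D0_ne_zero h
  have hhomog := congrArg (homog α) hk
  simp only [homog_add, homog_eK] at hhomog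
  push_cast at hhomog
  linarith

theorem precNorm_eq_of_DMat_ne_zero (h : DMat n β γ ≠ 0) :
    precNorm γ = precNorm β + (plen n / 2 - 1) := by
  rw [eq_add_eN_of_DMat_ne_zero h, precNorm_add, precNorm_eN]

theorem homog_eq_of_DMat_ne_zero (α : ℝ) (h : DMat n β γ ≠ 0) :
    homog α γ = homog α β + plen n - α := by
  rw [eq_add_eN_of_DMat_ne_zero h, homog_add, homog_eN]

end MatrixEntries

/-- For `D ∈ {D^(0), D^((1,0))}` and all multi-indices `γ'`, `γ`: if `D_{γ'}^γ ≠ 0`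
then `γ ≺ γ'` and `|γ| ≤ |γ'| + 1 − α`. -/
theorem statement17 (α : ℝ) (D : MIdx → MIdx → ℕ)
    (hD : D = D0 ∨ D = DMat (1, 0)) (γ' γ : MIdx) (h : D γ' γ ≠ 0) :
    precNorm γ < precNorm γ' ∧ homog α γ ≤ homog α γ' + 1 - α := by
  rcases hD with rfl | rfl
  · have hhomog := homog_eq_of_D0_ne_zero α h
    exact ⟨precNorm_lt_of_D0_ne_zero h, by linarith⟩
  · let n : {n : ℕ × ℕ // n ≠ (0, 0)} := ⟨(1, 0), by decide⟩
    have hn : (plen n : ℝ) = 1 := by simp [n, plen]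
    have hprec := precNorm_eq_of_DMat_ne_zero (n := n) h
    have hhomog := homog_eq_of_DMat_ne_zero (n := n) α h
    rw [hn] at hprec hhomog
    exact ⟨by linarith, hhomog.le⟩
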